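/- arXiv:1609.08568 — 3 statements merged into one kernel-verified Lean document; each statement's English description precedes it below -/
import Mathlib

section
/- Fix H ∈ (0, 1/2) and d ∈ (−2H, ∞). The function λ_d, defined by λ_d(ρ) = ∫_{η_d}^{ρ} (d + 2H cosh r)/√(sinh² r − (d + 2H cosh r)²) dr for ρ ≥ η_d, is strictly increasing on [η_d, ∞) and satisfies lim_{ρ→∞} λ_d(ρ) = ∞. -/
open MeasureTheory

/-- Inverse hyperbolic cosine: the inverse of `cosh` restricted to `[1, ∞)`. -/
noncomputable def arcosh (x : ℝ) : ℝ := Real.log (x + Real.sqrt (x ^ 2 - 1))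

/-- The neck parameter `η_d` of the `H`-catenoid `𝒞^H_d`. -/
noncomputable def eta (H d : ℝ) : ℝ :=
  arcosh ((2 * d * H + Real.sqrt (1 - 4 * H ^ 2 + d ^ 2)) / (1 - 4 * H ^ 2))

/-- The height function `λ_d(ρ)` of the generating curve of the `H`-catenoid. -/
noncomputable def lam (H d ρ : ℝ) : ℝ :=
  ∫ r in eta H d..ρ,
    (d + 2 * H * Real.cosh r) /
      Real.sqrt (Real.sinh r ^ 2 - (d + 2 * H * Real.cosh r) ^ 2)

/-!
Viewed as a quadratic in `cosh r`, the expression under the square root of `λ_d` has larger root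
`x = cosh η_d > 1` and factors as `(cosh r - x) * ((1 - 4H²) (cosh r - x) + 2s)` with
`s = √(1 - 4H² + d²) > 0`. By convexity of `cosh` it therefore grows at least linearly in `r - η_d`,
so the integrand has at worst an integrable inverse square root singularity at `η_d`. The numerator
is at least `m cosh r` with `m = min (2H) (d + 2H) > 0`, while the square root is at most `cosh r`;
so the integrand is bounded below by `m`, which forces both strict monotonicity and divergence.
-/

open Set Filter

theorem strictMonoOn_intervalIntegral_of_pos {f : ℝ → ℝ} {a : ℝ}
    (hf : ∀ b, a ≤ b → IntervalIntegrable f volume a b) (hpos : ∀ x, a < x → 0 < f x) :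
    StrictMonoOn (fun b => ∫ x in a..b, f x) (Ici a) := by
  intro b hb c hc hbc
  have hbc_int : IntervalIntegrable f volume b c := (hf b hb).symm.trans (hf c hc)
  rw [← sub_pos, intervalIntegral.integral_interval_sub_left (hf c hc) (hf b hb)]
  exact intervalIntegral.intervalIntegral_pos_of_pos_on hbc_int
    (fun x hx => hpos x (lt_of_le_of_lt hb hx.1)) hbc

theorem tendsto_intervalIntegral_atTop_of_eventually_const_le {f : ℝ → ℝ} {a m : ℝ}
    (hf : ∀ᶠ b in atTop, IntervalIntegrable f volume a b) (hm : 0 < m)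
    (hle : ∀ᶠ x in atTop, m ≤ f x) :
    Tendsto (fun b => ∫ x in a..b, f x) atTop atTop := by
  obtain ⟨b₀, hb₀⟩ := eventually_atTop.1 (hf.and hle)
  have hlinear : Tendsto (fun b => (∫ x in a..b₀, f x) + m * (b - b₀)) atTop atTop :=
    tendsto_atTop_add_const_left _ _
      ((tendsto_atTop_add_const_right _ _ tendsto_id).const_mul_atTop hm)
  refine tendsto_atTop_mono' _ ?_ hlinear
  filter_upwards [eventually_ge_atTop b₀] with b hb
  have hint₀ : IntervalIntegrable f volume a b₀ := (hb₀ b₀ le_rfl).1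
  have hint : IntervalIntegrable f volume b₀ b := hint₀.symm.trans (hb₀ b hb).1
  calc (∫ x in a..b₀, f x) + m * (b - b₀)
      = (∫ x in a..b₀, f x) + ∫ _ in b₀..b, m := by
        rw [intervalIntegral.integral_const, smul_eq_mul, mul_comm]
    _ ≤ (∫ x in a..b₀, f x) + ∫ x in b₀..b, f x := by
        gcongr
        exact intervalIntegral.integral_mono_on hb intervalIntegrable_const hint
          fun x hx => (hb₀ x hx.1).2
    _ = ∫ x in a..b, f x := intervalIntegral.integral_add_adjacent_intervals hint₀ hint

theorem intervalIntegrable_inv_sqrt_of_mul_sub_le {q : ℝ → ℝ} {a b c : ℝ} (hab : a ≤ b)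
    (hq : AEStronglyMeasurable q (volume.restrict (Ioc a b))) (hc : 0 < c)
    (hle : ∀ r ∈ Ioc a b, c * (r - a) ≤ q r) :
    IntervalIntegrable (fun r => (√(q r))⁻¹) volume a b := by
  have hdom : IntervalIntegrable (fun r => (√c)⁻¹ * (r - a) ^ (-(1 / 2) : ℝ)) volume a b := by
    have hrpow : IntervalIntegrable (fun x : ℝ => x ^ (-(1 / 2) : ℝ)) volume 0 (b - a) :=
      intervalIntegral.intervalIntegrable_rpow' (by norm_num)
    simpa using (hrpow.comp_sub_right a).const_mul (√c)⁻¹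
  refine hdom.mono_fun' ?_ ?_
  · rw [uIoc_of_le hab]
    exact (Real.continuous_sqrt.comp_aestronglyMeasurable hq).aemeasurable.inv.aestronglyMeasurable
  · rw [uIoc_of_le hab]
    refine (ae_restrict_iff' measurableSet_Ioc).2 (.of_forall fun r hr => ?_)
    have hra : 0 < r - a := sub_pos.2 hr.1
    calc ‖(√(q r))⁻¹‖ = (√(q r))⁻¹ := Real.norm_of_nonneg (by positivity)
      _ ≤ (√(c * (r - a)))⁻¹ := by gcongr; exact hle r hr
      _ = (√c)⁻¹ * (r - a) ^ (-(1 / 2) : ℝ) := by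
        rw [Real.sqrt_mul hc.le, mul_inv, Real.rpow_neg hra.le, Real.sqrt_eq_rpow (r - a)]

theorem sinh_mul_sub_le_cosh_sub_cosh (a r : ℝ) :
    Real.sinh a * (r - a) ≤ Real.cosh r - Real.cosh a := by
  have hexp (x y : ℝ) : Real.exp x * (y - x + 1) ≤ Real.exp y := by
    calc Real.exp x * (y - x + 1) ≤ Real.exp x * Real.exp (y - x) := by
          gcongr
          exact Real.add_one_le_exp _
      _ = Real.exp y := by rw [← Real.exp_add, add_sub_cancel]
  rw [Real.sinh_eq, Real.cosh_eq, Real.cosh_eq]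
  linarith [hexp a r, hexp (-a) (-r)]

theorem min_mul_cosh_le_add_mul_cosh (b d r : ℝ) :
    min b (d + b) * Real.cosh r ≤ d + b * Real.cosh r := by
  have hcosh : 1 ≤ Real.cosh r := Real.one_le_cosh r
  rcases le_total 0 d with hd | hd
  · rw [min_eq_left (by linarith)]
    linarith
  · rw [min_eq_right (by linarith)]
    nlinarith

/-- The hyperbolic cosine of the neck parameter `η_d`: the larger root of `lamRadicand` as a
quadratic polynomial in `cosh r`. -/
noncomputable def coshEta (H d : ℝ) : ℝ :=
  (2 * d * H + √(1 - 4 * H ^ 2 + d ^ 2)) / (1 - 4 * H ^ 2)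

/-- The expression under the square root in the definition of `λ_d`. -/
noncomputable def lamRadicand (H d r : ℝ) : ℝ :=
  Real.sinh r ^ 2 - (d + 2 * H * Real.cosh r) ^ 2

/-- The integrand of `λ_d`. Where `lamRadicand H d r ≤ 0` it takes the junk value `0`. -/
noncomputable def lamIntegrand (H d r : ℝ) : ℝ :=
  (d + 2 * H * Real.cosh r) / √(lamRadicand H d r)

section Catenoid

variable {H d : ℝ}

theorem one_lt_coshEta (hH : 4 * H ^ 2 < 1) (hd : -2 * H < d) : 1 < coshEta H d := by
  have ha : 0 < 1 - 4 * H ^ 2 := sub_pos.2 hH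
  have hsq : (1 - 4 * H ^ 2 - 2 * d * H) ^ 2 < 1 - 4 * H ^ 2 + d ^ 2 := by
    have : 0 < (1 - 4 * H ^ 2) * (d + 2 * H) ^ 2 := mul_pos ha (pow_pos (by linarith) 2)
    linear_combination this
  rw [coshEta, lt_div_iff₀ ha]
  linarith [Real.lt_sqrt_of_sq_lt hsq]

theorem eta_pos (hH : 4 * H ^ 2 < 1) (hd : -2 * H < d) : 0 < eta H d :=
  Real.arcosh_pos (one_lt_coshEta hH hd)

theorem cosh_eta (hH : 4 * H ^ 2 < 1) (hd : -2 * H < d) : Real.cosh (eta H d) = coshEta H d :=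
  Real.cosh_arcosh (one_lt_coshEta hH hd).le

theorem lamRadicand_eq_mul (hH : 4 * H ^ 2 < 1) (d r : ℝ) :
    lamRadicand H d r = (Real.cosh r - coshEta H d) *
      ((1 - 4 * H ^ 2) * (Real.cosh r - coshEta H d) + 2 * √(1 - 4 * H ^ 2 + d ^ 2)) := by
  have ha : 0 < 1 - 4 * H ^ 2 := sub_pos.2 hH
  have hs : √(1 - 4 * H ^ 2 + d ^ 2) ^ 2 = 1 - 4 * H ^ 2 + d ^ 2 := Real.sq_sqrt (by positivity)
  have hx : (1 - 4 * H ^ 2) * coshEta H d = 2 * d * H + √(1 - 4 * H ^ 2 + d ^ 2) :=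
    mul_div_cancel₀ _ ha.ne'
  have hs_eq : √(1 - 4 * H ^ 2 + d ^ 2) = (1 - 4 * H ^ 2) * coshEta H d - 2 * d * H := by
    linarith
  rw [lamRadicand, Real.sinh_sq]
  rw [hs_eq] at hs ⊢
  apply mul_left_cancel₀ ha.ne'
  linear_combination hs

theorem mul_sub_eta_le_lamRadicand (hH : 4 * H ^ 2 < 1) (hd : -2 * H < d) {r : ℝ}
    (hr : eta H d ≤ r) :
    2 * √(1 - 4 * H ^ 2 + d ^ 2) * Real.sinh (eta H d) * (r - eta H d) ≤ lamRadicand H d r := by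
  have ha : 0 < 1 - 4 * H ^ 2 := sub_pos.2 hH
  have hsinh : 0 < Real.sinh (eta H d) := Real.sinh_pos_iff.2 (eta_pos hH hd)
  have htangent : Real.sinh (eta H d) * (r - eta H d) ≤ Real.cosh r - coshEta H d := by
    simpa only [cosh_eta hH hd] using sinh_mul_sub_le_cosh_sub_cosh (eta H d) r
  have hcosh : 0 ≤ Real.cosh r - coshEta H d :=
    (mul_nonneg hsinh.le (sub_nonneg.2 hr)).trans htangent
  rw [lamRadicand_eq_mul hH]
  calc 2 * √(1 - 4 * H ^ 2 + d ^ 2) * Real.sinh (eta H d) * (r - eta H d)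
      = (Real.sinh (eta H d) * (r - eta H d)) * (2 * √(1 - 4 * H ^ 2 + d ^ 2)) := by ring
    _ ≤ (Real.cosh r - coshEta H d) * (2 * √(1 - 4 * H ^ 2 + d ^ 2)) := by gcongr
    _ ≤ (Real.cosh r - coshEta H d) *
        ((1 - 4 * H ^ 2) * (Real.cosh r - coshEta H d) + 2 * √(1 - 4 * H ^ 2 + d ^ 2)) := by
      gcongr
      exact le_add_of_nonneg_left (mul_nonneg ha.le hcosh)

theorem two_mul_sqrt_mul_sinh_eta_pos (hH : 4 * H ^ 2 < 1) (hd : -2 * H < d) :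
    0 < 2 * √(1 - 4 * H ^ 2 + d ^ 2) * Real.sinh (eta H d) := by
  have hsqrt : 0 < √(1 - 4 * H ^ 2 + d ^ 2) := Real.sqrt_pos.2 (by linarith [sq_nonneg d])
  have hsinh : 0 < Real.sinh (eta H d) := Real.sinh_pos_iff.2 (eta_pos hH hd)
  exact mul_pos (mul_pos two_pos hsqrt) hsinh

theorem lamRadicand_pos (hH : 4 * H ^ 2 < 1) (hd : -2 * H < d) {r : ℝ} (hr : eta H d < r) :
    0 < lamRadicand H d r :=
  (mul_pos (two_mul_sqrt_mul_sinh_eta_pos hH hd) (sub_pos.2 hr)).trans_le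
    (mul_sub_eta_le_lamRadicand hH hd hr.le)

theorem sqrt_lamRadicand_le_cosh (H d r : ℝ) : √(lamRadicand H d r) ≤ Real.cosh r := by
  rw [Real.sqrt_le_left (Real.cosh_pos r).le, lamRadicand, Real.sinh_sq]
  linarith [sq_nonneg (d + 2 * H * Real.cosh r)]

theorem intervalIntegrable_lamIntegrand (hH : 4 * H ^ 2 < 1) (hd : -2 * H < d) {ρ : ℝ}
    (hρ : eta H d ≤ ρ) : IntervalIntegrable (lamIntegrand H d) volume (eta H d) ρ := by
  have hradicand : Continuous (lamRadicand H d) := by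
    unfold lamRadicand
    fun_prop
  have hinv : IntervalIntegrable (fun r => (√(lamRadicand H d r))⁻¹) volume (eta H d) ρ :=
    intervalIntegrable_inv_sqrt_of_mul_sub_le hρ hradicand.aestronglyMeasurable
      (two_mul_sqrt_mul_sinh_eta_pos hH hd)
      fun r hr => mul_sub_eta_le_lamRadicand hH hd hr.1.le
  exact hinv.continuousOn_mul (g := fun r => d + 2 * H * Real.cosh r) (by fun_prop)

theorem min_le_lamIntegrand (hH : 0 ≤ H) (hd : -2 * H ≤ d) {r : ℝ}
    (hr : 0 < lamRadicand H d r) : min (2 * H) (d + 2 * H) ≤ lamIntegrand H d r := by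
  have hmin : 0 ≤ min (2 * H) (d + 2 * H) := le_min (by linarith) (by linarith)
  rw [lamIntegrand, le_div_iff₀ (Real.sqrt_pos.2 hr)]
  calc min (2 * H) (d + 2 * H) * √(lamRadicand H d r)
      ≤ min (2 * H) (d + 2 * H) * Real.cosh r := by
        gcongr
        exact sqrt_lamRadicand_le_cosh H d r
    _ ≤ d + 2 * H * Real.cosh r := min_mul_cosh_le_add_mul_cosh (2 * H) d r

end Catenoid

theorem stmt_7 (H d : ℝ) (hH0 : 0 < H) (hH : H < 1 / 2) (hd : -2 * H < d) :
    StrictMonoOn (lam H d) (Set.Ici (eta H d)) ∧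
    Filter.Tendsto (lam H d) Filter.atTop Filter.atTop := by
  have hH' : 4 * H ^ 2 < 1 := by nlinarith
  have hmin : 0 < min (2 * H) (d + 2 * H) := lt_min (by linarith) (by linarith)
  have hint (ρ : ℝ) (hρ : eta H d ≤ ρ) :
      IntervalIntegrable (lamIntegrand H d) volume (eta H d) ρ :=
    intervalIntegrable_lamIntegrand hH' hd hρ
  have hle (r : ℝ) (hr : eta H d < r) : min (2 * H) (d + 2 * H) ≤ lamIntegrand H d r :=
    min_le_lamIntegrand hH0.le hd.le (lamRadicand_pos hH' hd hr)
  exact ⟨strictMonoOn_intervalIntegral_of_pos hint fun r hr => hmin.trans_le (hle r hr),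
    tendsto_intervalIntegral_atTop_of_eventually_const_le
      ((eventually_ge_atTop _).mono hint) hmin ((eventually_gt_atTop _).mono hle)⟩
end

section
/- Fix H ∈ (0, 1/2) and d ∈ (−2H, ∞). For every ρ ≥ η_d, ∫_{η_d}^{ρ} 2H sinh r/√(sinh² r − (d + 2H cosh r)²) dr = (2H/√(1 − 4H²)) · arcosh( ((1 − 4H²) cosh ρ − 2dH)/√(d² + 1 − 4H²) ). -/
open MeasureTheory

/-!
Set `S = √(d² + 1 - 4H²)`. Completing the square in `cosh r` turns the radicand into
`(u² - 1) S² / (1 - 4H²)` with `u = ((1 - 4H²) cosh r - 2dH) / S`, so the integrand is a constant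
multiple of `u' / √(u² - 1) = (arcosh u)'`, and `η_d` is exactly the point where `u = 1`. The
integrand may blow up there, but the primitive `arcosh u` is continuous and increasing, so its
derivative is integrable.
-/

theorem arcosh_eq_real_arcosh : arcosh = Real.arcosh := rfl

section Substitution

variable {u u' : ℝ → ℝ} {a b : ℝ}

theorem integral_eq_sub_of_hasDerivAt_of_nonneg (hab : a ≤ b) (hu : ContinuousOn u (Set.Icc a b))
    (hu' : ∀ x ∈ Set.Ioo a b, HasDerivAt u (u' x) x) (hu'_nonneg : ∀ x ∈ Set.Ioo a b, 0 ≤ u' x) :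
    ∫ x in a..b, u' x = u b - u a :=
  intervalIntegral.integral_eq_sub_of_hasDerivAt_of_le hab hu hu' <|
    (intervalIntegrable_iff_integrableOn_Ioc_of_le hab).2 <|
      intervalIntegral.integrableOn_deriv_of_nonneg hu hu' hu'_nonneg

theorem integral_deriv_div_sqrt_sq_sub_one (hab : a ≤ b) (hu : ContinuousOn u (Set.Icc a b))
    (hu' : ∀ x ∈ Set.Ioo a b, HasDerivAt u (u' x) x) (hu'_pos : ∀ x ∈ Set.Ioo a b, 0 < u' x)
    (hua : 1 ≤ u a) :
    ∫ x in a..b, u' x / √(u x ^ 2 - 1) = Real.arcosh (u b) - Real.arcosh (u a) := by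
  have hmono : StrictMonoOn u (Set.Icc a b) :=
    strictMonoOn_of_hasDerivWithinAt_pos (convex_Icc a b) hu
      (fun x hx ↦ (hu' x (interior_Icc.subset hx)).hasDerivWithinAt)
      (fun x hx ↦ hu'_pos x (interior_Icc.subset hx))
  have one_le : ∀ x ∈ Set.Icc a b, 1 ≤ u x := fun x hx ↦
    hua.trans (hmono.monotoneOn (Set.left_mem_Icc.2 hab) hx hx.1)
  have one_lt : ∀ x ∈ Set.Ioo a b, 1 < u x := fun x hx ↦
    hua.trans_lt (hmono (Set.left_mem_Icc.2 hab) (Set.Ioo_subset_Icc_self hx) hx.1)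
  refine integral_eq_sub_of_hasDerivAt_of_nonneg hab
    (Real.continuousOn_arcosh.comp hu one_le) (fun x hx ↦ ?_)
    (fun x hx ↦ div_nonneg (hu'_pos x hx).le (Real.sqrt_nonneg _))
  rw [div_eq_inv_mul]
  exact (Real.hasDerivAt_arcosh (one_lt x hx)).comp x (hu' x hx)

end Substitution

/-- The substitution `u = ((1 - 4H²) cosh r - 2dH) / √(d² + 1 - 4H²)` which brings the radicand
`sinh² r - (d + 2H cosh r)²` to a multiple of `u² - 1`. -/
noncomputable def coshSubst (H d r : ℝ) : ℝ :=
  ((1 - 4 * H ^ 2) * Real.cosh r - 2 * d * H) / √(d ^ 2 + 1 - 4 * H ^ 2)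

section Catenoid

variable {H : ℝ}

theorem one_sub_four_mul_sq_pos (hH : |H| < 1 / 2) : 0 < 1 - 4 * H ^ 2 := by
  have : H ^ 2 < (1 / 2) ^ 2 := sq_lt_sq' (abs_lt.1 hH).1 (abs_lt.1 hH).2
  linarith

variable (d : ℝ)

theorem sq_add_one_sub_four_mul_sq_pos (hH : |H| < 1 / 2) : 0 < d ^ 2 + 1 - 4 * H ^ 2 := by
  linarith [sq_nonneg d, one_sub_four_mul_sq_pos hH]

theorem hasDerivAt_coshSubst (H r : ℝ) :
    HasDerivAt (coshSubst H d)
      ((1 - 4 * H ^ 2) * Real.sinh r / √(d ^ 2 + 1 - 4 * H ^ 2)) r :=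
  (((Real.hasDerivAt_cosh r).const_mul _).sub_const _).div_const _

theorem coshSubst_sq_sub_one (hH : |H| < 1 / 2) (r : ℝ) :
    coshSubst H d r ^ 2 - 1 =
      (1 - 4 * H ^ 2) * (Real.sinh r ^ 2 - (d + 2 * H * Real.cosh r) ^ 2) /
        (d ^ 2 + 1 - 4 * H ^ 2) := by
  have hS := sq_add_one_sub_four_mul_sq_pos d hH
  rw [coshSubst, div_pow, Real.sq_sqrt hS.le, div_sub_one hS.ne', Real.sinh_sq]
  ring

theorem sinh_div_sqrt_eq (hH : |H| < 1 / 2) (r : ℝ) :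
    Real.sinh r / √(Real.sinh r ^ 2 - (d + 2 * H * Real.cosh r) ^ 2) =
      (√(1 - 4 * H ^ 2))⁻¹ *
        ((1 - 4 * H ^ 2) * Real.sinh r / √(d ^ 2 + 1 - 4 * H ^ 2) /
          √(coshSubst H d r ^ 2 - 1)) := by
  have ha := one_sub_four_mul_sq_pos hH
  have hS := sq_add_one_sub_four_mul_sq_pos d hH
  rw [coshSubst_sq_sub_one d hH, Real.sqrt_div' _ hS.le, Real.sqrt_mul ha.le,
    div_div_div_cancel_right₀ (Real.sqrt_pos.2 hS).ne', mul_div_mul_comm, Real.div_sqrt,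
    inv_mul_cancel_left₀ (Real.sqrt_pos.2 ha).ne']

theorem one_le_two_mul_add_sqrt_div (hH : |H| < 1 / 2) :
    1 ≤ (2 * d * H + √(d ^ 2 + 1 - 4 * H ^ 2)) / (1 - 4 * H ^ 2) := by
  have ha := one_sub_four_mul_sq_pos hH
  have hsqrt : 1 - 4 * H ^ 2 - 2 * d * H ≤ √(d ^ 2 + 1 - 4 * H ^ 2) :=
    Real.le_sqrt_of_sq_le <| sub_nonneg.1 <|
      calc 0 ≤ (1 - 4 * H ^ 2) * (d + 2 * H) ^ 2 := by positivity
        _ = d ^ 2 + 1 - 4 * H ^ 2 - (1 - 4 * H ^ 2 - 2 * d * H) ^ 2 := by ring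
  rw [one_le_div ha]
  linarith

theorem eta_eq_arcosh (H : ℝ) :
    eta H d = Real.arcosh ((2 * d * H + √(d ^ 2 + 1 - 4 * H ^ 2)) / (1 - 4 * H ^ 2)) := by
  rw [eta, arcosh_eq_real_arcosh, add_sub_assoc, add_comm (d ^ 2)]

theorem eta_nonneg (hH : |H| < 1 / 2) : 0 ≤ eta H d := by
  rw [eta_eq_arcosh]
  exact Real.arcosh_nonneg (one_le_two_mul_add_sqrt_div d hH)

theorem cosh_eta_s10 (hH : |H| < 1 / 2) :
    Real.cosh (eta H d) = (2 * d * H + √(d ^ 2 + 1 - 4 * H ^ 2)) / (1 - 4 * H ^ 2) := by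
  rw [eta_eq_arcosh, Real.cosh_arcosh (one_le_two_mul_add_sqrt_div d hH)]

theorem coshSubst_eta (hH : |H| < 1 / 2) : coshSubst H d (eta H d) = 1 := by
  have hS := Real.sqrt_pos.2 (sq_add_one_sub_four_mul_sq_pos d hH)
  rw [coshSubst, cosh_eta_s10 d hH, mul_div_cancel₀ _ (one_sub_four_mul_sq_pos hH).ne',
    add_sub_cancel_left, div_self hS.ne']

theorem integral_deriv_coshSubst_div_sqrt (hH : |H| < 1 / 2) {ρ : ℝ} (hρ : eta H d ≤ ρ) :
    ∫ r in eta H d..ρ, (1 - 4 * H ^ 2) * Real.sinh r / √(d ^ 2 + 1 - 4 * H ^ 2) /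
        √(coshSubst H d r ^ 2 - 1) =
      Real.arcosh (coshSubst H d ρ) := by
  have hderiv_pos : ∀ r ∈ Set.Ioo (eta H d) ρ,
      0 < (1 - 4 * H ^ 2) * Real.sinh r / √(d ^ 2 + 1 - 4 * H ^ 2) := fun r hr ↦
    div_pos
      (mul_pos (one_sub_four_mul_sq_pos hH)
        (Real.sinh_pos_iff.2 ((eta_nonneg d hH).trans_lt hr.1)))
      (Real.sqrt_pos.2 (sq_add_one_sub_four_mul_sq_pos d hH))
  rw [integral_deriv_div_sqrt_sq_sub_one hρ
    (fun r _ ↦ (hasDerivAt_coshSubst d H r).continuousAt.continuousWithinAt)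
    (fun r _ ↦ hasDerivAt_coshSubst d H r) hderiv_pos (coshSubst_eta d hH).ge,
    coshSubst_eta d hH, Real.arcosh_zero, sub_zero]

theorem integral_sinh_div_sqrt (hH : |H| < 1 / 2) {ρ : ℝ} (hρ : eta H d ≤ ρ) :
    ∫ r in eta H d..ρ,
        Real.sinh r / √(Real.sinh r ^ 2 - (d + 2 * H * Real.cosh r) ^ 2) =
      (√(1 - 4 * H ^ 2))⁻¹ * Real.arcosh (coshSubst H d ρ) := by
  simp_rw [sinh_div_sqrt_eq d hH]
  rw [intervalIntegral.integral_const_mul, integral_deriv_coshSubst_div_sqrt d hH hρ]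

end Catenoid

theorem stmt_10_general (H d : ℝ) (hH : |H| < 1 / 2) (ρ : ℝ) (hρ : eta H d ≤ ρ) :
    (∫ r in eta H d..ρ,
        2 * H * Real.sinh r / √(Real.sinh r ^ 2 - (d + 2 * H * Real.cosh r) ^ 2)) =
      2 * H / √(1 - 4 * H ^ 2) *
        arcosh (((1 - 4 * H ^ 2) * Real.cosh ρ - 2 * d * H) / √(d ^ 2 + 1 - 4 * H ^ 2)) := by
  simp_rw [mul_div_assoc (2 * H)]
  rw [intervalIntegral.integral_const_mul, integral_sinh_div_sqrt d hH hρ,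
    arcosh_eq_real_arcosh, coshSubst, div_eq_mul_inv (2 * H), mul_assoc (2 * H)]

theorem stmt_10 (H d : ℝ) (hH0 : 0 < H) (hH : H < 1 / 2) (hd : -2 * H < d) :
    ∀ ρ : ℝ, eta H d ≤ ρ →
      (∫ r in eta H d..ρ,
          2 * H * Real.sinh r /
            Real.sqrt (Real.sinh r ^ 2 - (d + 2 * H * Real.cosh r) ^ 2)) =
        2 * H / Real.sqrt (1 - 4 * H ^ 2) *
          arcosh (((1 - 4 * H ^ 2) * Real.cosh ρ - 2 * d * H) /
            Real.sqrt (d ^ 2 + 1 - 4 * H ^ 2)) := by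
  exact stmt_10_general H d (abs_lt.2 ⟨by linarith, hH⟩)
end

section
/- For every real α > 1, the improper integral ∫_{arcosh α}^{∞} dr/√(cosh r − α) converges and satisfies ∫_{arcosh α}^{∞} dr/√(cosh r − α) < π/√(α − 1). -/
open MeasureTheory

/-! Write `a = arcosh α`. Since `(cosh r - 1) / exp r = (1 - exp (-r)) ^ 2 / 2` increases with
`r ≥ 0`, we have `cosh r - α > (α - 1) * (exp (r - a) - 1)` for `r > a`. Hence the integral is
smaller than `1 / √(α - 1)` times the integral of `1 / √(exp (r - a) - 1)` over `(a, ∞)`, and the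
latter is `π` because `2 * arctan √(exp (r - a) - 1)` is a primitive of its integrand. -/

section StrictMonotonicity

variable {X : Type*} [MeasurableSpace X] {μ : Measure X} {s : Set X} {f g : X → ℝ}

theorem setIntegral_strict_mono_on (hf : IntegrableOn f s μ) (hg : IntegrableOn g s μ)
    (hs : MeasurableSet s) (hμs : μ s ≠ 0) (hfg : ∀ x ∈ s, f x < g x) :
    ∫ x in s, f x ∂μ < ∫ x in s, g x ∂μ := by
  refine (setIntegral_mono_on hf hg hs fun x hx => (hfg x hx).le).lt_of_ne fun heq => hμs ?_
  have hlt : ∀ᵐ x ∂μ.restrict s, f x < g x := ae_restrict_of_forall_mem hs hfg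
  have hae : f =ᵐ[μ.restrict s] g :=
    (integral_eq_iff_of_ae_le hf hg (hlt.mono fun _ h => h.le)).1 heq
  have hfalse : ∀ᵐ _ ∂μ.restrict s, False := by
    filter_upwards [hlt, hae] with x hx hx' using hx.ne hx'
  rwa [Filter.eventually_false_iff_eq_bot, ae_eq_bot, Measure.restrict_eq_zero] at hfalse

end StrictMonotonicity

section ExpIntegral

open Real Set Filter Topology

variable {a r : ℝ}

theorem hasDerivAt_two_mul_arctan_sqrt_exp_sub_one (har : a < r) :
    HasDerivAt (fun r => 2 * arctan √(exp (r - a) - 1)) (1 / √(exp (r - a) - 1)) r := by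
  have hpos : 0 < exp (r - a) - 1 := sub_pos.2 (one_lt_exp_iff.2 (sub_pos.2 har))
  have hderiv :=
    (((((hasDerivAt_id' r).sub_const a).exp.sub_const 1).sqrt hpos.ne').arctan).const_mul 2
  refine hderiv.congr_deriv ?_
  rw [sq_sqrt hpos.le, add_sub_cancel]
  field_simp

theorem tendsto_two_mul_arctan_sqrt_exp_sub_one_atTop (a : ℝ) :
    Tendsto (fun r => 2 * arctan √(exp (r - a) - 1)) atTop (𝓝 π) := by
  have hexp : Tendsto (fun r => exp (r - a) - 1) atTop atTop :=
    tendsto_atTop_add_const_right _ _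
      (tendsto_exp_atTop.comp (tendsto_atTop_add_const_right _ (-a) tendsto_id))
  have harctan : Tendsto arctan atTop (𝓝 (π / 2)) :=
    tendsto_nhds_of_tendsto_nhdsWithin tendsto_arctan_atTop
  simpa only [Function.comp_def, mul_div_cancel₀ π (two_ne_zero' ℝ)] using
    (harctan.comp (tendsto_sqrt_atTop.comp hexp)).const_mul 2

theorem integrableOn_one_div_sqrt_exp_sub_one (a : ℝ) :
    IntegrableOn (fun r => 1 / √(exp (r - a) - 1)) (Ioi a) :=
  integrableOn_Ioi_deriv_of_nonneg (Continuous.continuousWithinAt (by fun_prop))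
    (fun _ => hasDerivAt_two_mul_arctan_sqrt_exp_sub_one) (fun _ _ => by positivity)
    (tendsto_two_mul_arctan_sqrt_exp_sub_one_atTop a)

theorem integral_one_div_sqrt_exp_sub_one (a : ℝ) :
    ∫ r in Ioi a, 1 / √(exp (r - a) - 1) = π := by
  rw [integral_Ioi_of_hasDerivAt_of_tendsto (Continuous.continuousWithinAt (by fun_prop))
    (fun _ => hasDerivAt_two_mul_arctan_sqrt_exp_sub_one)
    (integrableOn_one_div_sqrt_exp_sub_one a) (tendsto_two_mul_arctan_sqrt_exp_sub_one_atTop a)]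
  simp

end ExpIntegral

section CoshIntegral

open Real Set

variable {a r : ℝ}

theorem cosh_sub_one_eq_exp_mul_sq (r : ℝ) : cosh r - 1 = exp r * ((1 - exp (-r)) ^ 2 / 2) := by
  rw [cosh_eq, exp_neg]
  field_simp
  ring

theorem cosh_sub_one_mul_exp_sub_lt (ha : 0 ≤ a) (har : a < r) :
    (cosh a - 1) * exp (r - a) < cosh r - 1 := by
  have ha_nonneg : 0 ≤ 1 - exp (-a) := sub_nonneg.2 (exp_le_one_iff.2 (neg_nonpos.2 ha))
  calc (cosh a - 1) * exp (r - a)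
      = exp r * ((1 - exp (-a)) ^ 2 / 2) := by
        rw [cosh_sub_one_eq_exp_mul_sq, exp_sub]
        field_simp
    _ < exp r * ((1 - exp (-r)) ^ 2 / 2) := by gcongr
    _ = cosh r - 1 := (cosh_sub_one_eq_exp_mul_sq r).symm

theorem one_div_sqrt_cosh_sub_cosh_lt (ha : 0 < a) (har : a < r) :
    1 / √(cosh r - cosh a) < 1 / √(cosh a - 1) * (1 / √(exp (r - a) - 1)) := by
  have hcosh : 0 < cosh a - 1 := sub_pos.2 (one_lt_cosh.2 ha.ne')
  have hexp : 0 < exp (r - a) - 1 := sub_pos.2 (one_lt_exp_iff.2 (sub_pos.2 har))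
  have hlt : (cosh a - 1) * (exp (r - a) - 1) < cosh r - cosh a := by
    linarith [cosh_sub_one_mul_exp_sub_lt ha.le har]
  rw [one_div_mul_one_div, ← sqrt_mul hcosh.le]
  gcongr

theorem integrableOn_one_div_sqrt_cosh_sub_cosh (ha : 0 < a) :
    IntegrableOn (fun r => 1 / √(cosh r - cosh a)) (Ioi a) := by
  refine ((integrableOn_one_div_sqrt_exp_sub_one a).const_mul (1 / √(cosh a - 1))).mono' ?_ ?_
  · exact Measurable.aestronglyMeasurable (by fun_prop)
  · refine ae_restrict_of_forall_mem measurableSet_Ioi fun r hr => ?_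
    rw [norm_of_nonneg (by positivity)]
    exact (one_div_sqrt_cosh_sub_cosh_lt ha hr).le

theorem integral_one_div_sqrt_cosh_sub_cosh_lt (ha : 0 < a) :
    ∫ r in Ioi a, 1 / √(cosh r - cosh a) < π / √(cosh a - 1) :=
  calc ∫ r in Ioi a, 1 / √(cosh r - cosh a)
      < ∫ r in Ioi a, 1 / √(cosh a - 1) * (1 / √(exp (r - a) - 1)) :=
        setIntegral_strict_mono_on (integrableOn_one_div_sqrt_cosh_sub_cosh ha)
          ((integrableOn_one_div_sqrt_exp_sub_one a).const_mul _) measurableSet_Ioi (by simp)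
          fun _ => one_div_sqrt_cosh_sub_cosh_lt ha
    _ = π / √(cosh a - 1) := by
        rw [integral_const_mul, integral_one_div_sqrt_exp_sub_one, one_div_mul_eq_div]

end CoshIntegral

theorem stmt_13 (α : ℝ) (hα : 1 < α) :
    IntegrableOn (fun r : ℝ => 1 / Real.sqrt (Real.cosh r - α)) (Set.Ioi (arcosh α)) volume ∧
    (∫ r in Set.Ioi (arcosh α), 1 / Real.sqrt (Real.cosh r - α)) <
      Real.pi / Real.sqrt (α - 1) := by
  have hpos : 0 < arcosh α := Real.arcosh_pos hα
  have hcosh : Real.cosh (arcosh α) = α := Real.cosh_arcosh hα.le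
  simpa only [hcosh] using And.intro (integrableOn_one_div_sqrt_cosh_sub_cosh hpos)
    (integral_one_div_sqrt_cosh_sub_cosh_lt hpos)
end
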